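/- Let ψ : ℝ → [0,∞) be a sublinear potential satisfying (A5'), let μ ∈ M(ℝ^d), let ρ ∈ C_c^∞(ℝ^d) be nonnegative with support in the unit ball, ∫ρ dx = 1 and ρ(x) = ρ(−x), and for δ > 0 set ρ_δ(x) = δ^{−d} ρ(x/δ). Then for every δ > 0: ∫_{ℝ^d} ψ((ρ_δ ∗ μ)(x)) dx ≤ sup { ∫_{ℝ^d} v dμ − ∫_{ℝ^d} ψ*(v) dx : v ∈ C_c(ℝ^d), ψ*∘v ∈ L¹(ℝ^d) }, where (ρ_δ ∗ μ)(x) = ∫_{ℝ^d} ρ_δ(x − y) dμ(y). -/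

import Mathlib

open scoped ENNReal
open MeasureTheory

/-- The convex conjugate `f*(x) = sup_{y ∈ ℝ} (x·y − f(y))`, taking values in `[0,∞]`. -/
noncomputable def convexConj (f : ℝ → ℝ) (x : ℝ) : ℝ≥0∞ :=
  ⨆ y : ℝ, ENNReal.ofReal (x * y - f y)

/-- Integral of a real function against a finite signed Radon measure. -/
noncomputable def sintegral {α : Type*} [MeasurableSpace α]
    (μ : MeasureTheory.SignedMeasure α) (v : α → ℝ) : ℝ :=
  ∫ x, v x ∂μ.toJordanDecomposition.posPart - ∫ x, v x ∂μ.toJordanDecomposition.negPart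

/-!
Let `g = ρ_δ ∗ μ`. For small `h > 0`, the forward difference quotient of `ψ` at `g x` almost
attains the supremum defining `ψ`, so `ψ ∘ g` is recovered from the test functions
`w = χ · (ψ(g + h) - ψ(g)) / h` with `χ` a cutoff. The defect in Young's inequality is at most the
second difference `ψ(g + h) + ψ(g - h) - 2ψ(g)`, which vanishes locally uniformly as `h → 0`. Hence
`∫ ψ(g) ≤ sup_w (∫ w g - ∫ ψ*(w))`.
Now `∫ w g = ∫ v dμ` for the average `v(x) = ∫ w(x + s) ρ_δ(s) ds`, and Jensen's inequality for
`ψ*` together with translation invariance gives `∫ ψ*(v) ≤ ∫ ψ*(w)`, so `v` competes in the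
original supremum at least as well as `w`.
-/

open Set Filter Topology Pointwise

section Conjugate

variable {ψ : ℝ → ℝ}

/-- The symmetric second difference of `ψ` at `y` with step `h`; it bounds the defect in Young's
inequality when a forward difference quotient stands in for a subgradient. -/
def secondDifference (ψ : ℝ → ℝ) (h y : ℝ) : ℝ :=
  ψ (y + h) + ψ (y - h) - 2 * ψ y

theorem add_mul_slope_le_of_notMem_Ioo (hψ : ConvexOn ℝ univ ψ) {a b z : ℝ} (hab : a < b)
    (hz : z ∉ Ioo a b) : ψ a + (z - a) * slope ψ a b ≤ ψ z := by
  have hslope : (z - a) * slope ψ a z = ψ z - ψ a := sub_smul_slope ψ a z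
  have hmono := hψ.slope_mono (mem_univ a)
  have hb : b ∈ univ \ {a} := ⟨trivial, hab.ne'⟩
  rcases lt_trichotomy z a with hza | rfl | haz
  · have hle := hmono ⟨trivial, hza.ne⟩ hb (hza.trans hab).le
    linarith [mul_le_mul_of_nonpos_left hle (sub_nonpos.mpr hza.le)]
  · simp
  · have hbz : b ≤ z := not_lt.mp fun hzb => hz ⟨haz, hzb⟩
    have hle := hmono hb ⟨trivial, haz.ne'⟩ hbz
    linarith [mul_le_mul_of_nonneg_left hle (sub_nonneg.mpr haz.le)]

theorem secondDifference_nonneg (hψ : ConvexOn ℝ univ ψ) {h : ℝ} (hh : 0 < h) (y : ℝ) :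
    0 ≤ secondDifference ψ h y := by
  have hchord := add_mul_slope_le_of_notMem_Ioo hψ (lt_add_of_pos_right y hh) (z := y - h)
    fun hz => by linarith [hz.1]
  have hslope : (y + h - y) * slope ψ y (y + h) = ψ (y + h) - ψ y := sub_smul_slope ψ y (y + h)
  unfold secondDifference
  linarith

theorem slope_mul_sub_le (hψ : ConvexOn ℝ univ ψ) {h : ℝ} (hh : 0 < h) (y z : ℝ) :
    slope ψ y (y + h) * z - ψ z ≤
      slope ψ y (y + h) * y - ψ y + secondDifference ψ h y := by
  have hnonneg := secondDifference_nonneg hψ hh y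
  by_cases hz : z ∈ Ioo y (y + h)
  · have hchord := add_mul_slope_le_of_notMem_Ioo hψ (sub_lt_self y hh) (z := z)
      fun hz' => by linarith [hz.1, hz'.2]
    have hforward : (y + h - y) * slope ψ y (y + h) = ψ (y + h) - ψ y :=
      sub_smul_slope ψ y (y + h)
    have hbackward : (y - (y - h)) * slope ψ (y - h) y = ψ y - ψ (y - h) :=
      sub_smul_slope ψ (y - h) y
    have hdiff : secondDifference ψ h y = h * (slope ψ y (y + h) - slope ψ (y - h) y) := by
      unfold secondDifference
      linarith
    have hslope : 0 ≤ slope ψ y (y + h) - slope ψ (y - h) y :=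
      nonneg_of_mul_nonneg_right (hdiff ▸ hnonneg) hh
    have hstep : (z - y) * (slope ψ y (y + h) - slope ψ (y - h) y) ≤
        h * (slope ψ y (y + h) - slope ψ (y - h) y) :=
      mul_le_mul_of_nonneg_right (by linarith [hz.2]) hslope
    linarith
  · have hchord := add_mul_slope_le_of_notMem_Ioo hψ (lt_add_of_pos_right y hh) hz
    linarith

theorem convexConj_mul_slope_le (hψ : ConvexOn ℝ univ ψ) (hnonneg : ∀ x, 0 ≤ ψ x) {c h : ℝ}
    (hc : c ∈ Icc 0 1) (hh : 0 < h) (y : ℝ) :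
    convexConj ψ (c * slope ψ y (y + h)) ≤
      ENNReal.ofReal (c * (slope ψ y (y + h) * y - ψ y + secondDifference ψ h y)) := by
  refine iSup_le fun z => ENNReal.ofReal_le_ofReal ?_
  calc c * slope ψ y (y + h) * z - ψ z
      ≤ c * slope ψ y (y + h) * z - c * ψ z :=
        sub_le_sub_left (mul_le_of_le_one_left (hnonneg z) hc.2) _
    _ = c * (slope ψ y (y + h) * z - ψ z) := by ring
    _ ≤ _ := mul_le_mul_of_nonneg_left (slope_mul_sub_le hψ hh y z) hc.1

theorem measurable_convexConj (ψ : ℝ → ℝ) : Measurable (convexConj ψ) := by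
  refine (lowerSemicontinuous_iSup fun y => Continuous.lowerSemicontinuous ?_).measurable
  exact ENNReal.continuous_ofReal.comp (by fun_prop)

theorem ofReal_integral_le_lintegral_ofReal {X : Type*} [MeasurableSpace X] {m : Measure X}
    {f : X → ℝ} (hf : Integrable f m) :
    ENNReal.ofReal (∫ x, f x ∂m) ≤ ∫⁻ x, ENNReal.ofReal (f x) ∂m := by
  apply ENNReal.ofReal_le_of_le_toReal
  rw [integral_eq_lintegral_pos_part_sub_lintegral_neg_part hf]
  exact sub_le_self _ ENNReal.toReal_nonneg

theorem convexConj_integral_le_lintegral {X : Type*} [MeasurableSpace X] {κ : Measure X}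
    [IsProbabilityMeasure κ] {f : X → ℝ} (hf : Integrable f κ) :
    convexConj ψ (∫ x, f x ∂κ) ≤ ∫⁻ x, convexConj ψ (f x) ∂κ := by
  refine iSup_le fun z => ?_
  have haffine : (∫ x, f x ∂κ) * z - ψ z = ∫ x, (f x * z - ψ z) ∂κ := by
    rw [integral_sub (hf.mul_const z) (integrable_const _), integral_mul_const, integral_const,
      probReal_univ, one_smul]
  calc ENNReal.ofReal ((∫ x, f x ∂κ) * z - ψ z)
      ≤ ∫⁻ x, ENNReal.ofReal (f x * z - ψ z) ∂κ := haffine ▸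
        ofReal_integral_le_lintegral_ofReal ((hf.mul_const z).sub (integrable_const _))
    _ ≤ ∫⁻ x, convexConj ψ (f x) ∂κ :=
        lintegral_mono fun x => le_iSup (fun y => ENNReal.ofReal (f x * y - ψ y)) z

end Conjugate

section DualEnergy

variable {X : Type*} [TopologicalSpace X] [MeasurableSpace X] {m : Measure X} {ψ : ℝ → ℝ}

/-- The supremum of `L v - ∫ ψ*(v) dm` over `v ∈ C_c(X)` with `∫ ψ*(v) dm` finite, for a functional
`L` on test functions: the dual formula for the mass `∫ ψ(μ)` when `L v = ∫ v dμ`. The truncation by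
`ENNReal.ofReal` is harmless for `ψ ≥ 0` with `ψ 0 = 0` and `L 0 = 0`, since then `v = 0`
contributes `0`. -/
noncomputable def dualEnergy (ψ : ℝ → ℝ) (m : Measure X) (L : (X → ℝ) → ℝ) : ℝ≥0∞ :=
  ⨆ v : {v : X → ℝ //
      Continuous v ∧ HasCompactSupport v ∧ (∫⁻ x, convexConj ψ (v x) ∂m) ≠ ⊤},
    ENNReal.ofReal (L v.1 - (∫⁻ x, convexConj ψ (v.1 x) ∂m).toReal)

theorem ofReal_sub_le_dualEnergy (L : (X → ℝ) → ℝ) {v : X → ℝ} (hv : Continuous v)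
    (hvc : HasCompactSupport v) {b : ℝ} (hb : 0 ≤ b)
    (hle : ∫⁻ x, convexConj ψ (v x) ∂m ≤ ENNReal.ofReal b) :
    ENNReal.ofReal (L v - b) ≤ dualEnergy ψ m L :=
  le_iSup_of_le ⟨v, hv, hvc, ne_top_of_le_ne_top ENNReal.ofReal_ne_top hle⟩
    (ENNReal.ofReal_le_ofReal (sub_le_sub_left (ENNReal.toReal_le_of_le_ofReal hb hle) _))

theorem lintegral_le_of_forall_setLIntegral_isCompact_le [WeaklyLocallyCompactSpace X]
    [SigmaCompactSpace X] {f : X → ℝ≥0∞} {c : ℝ≥0∞}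
    (hf : ∀ K, IsCompact K → ∫⁻ x in K, f x ∂m ≤ c) : ∫⁻ x, f x ∂m ≤ c := by
  let K := CompactExhaustion.choice X
  rw [← setLIntegral_univ, ← K.iUnion_eq,
    setLIntegral_iUnion_of_directed f (directed_of_isDirected_le K.subset)]
  exact iSup_le fun n => hf (K n) (K.isCompact n)

variable [OpensMeasurableSpace X] [IsFiniteMeasureOnCompacts m] {g χ : X → ℝ}

theorem tendsto_integral_mul_secondDifference (hψ : Continuous ψ) (hg : Continuous g)
    (hχ : Continuous χ) (hχc : HasCompactSupport χ) :
    Tendsto (fun h => ∫ x, χ x * secondDifference ψ h (g x) ∂m) (𝓝 0) (𝓝 0) := by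
  have hcont : Continuous fun h => ∫ x, χ x * secondDifference ψ h (g x) ∂m := by
    refine continuousOn_univ.mp (continuousOn_integral_of_compact_support hχc.isCompact ?_ ?_)
    · unfold secondDifference
      exact Continuous.continuousOn (by fun_prop)
    · intro h x _ hx
      rw [image_eq_zero_of_notMem_tsupport hx, zero_mul]
  simpa [secondDifference, ← two_mul] using hcont.tendsto 0

theorem ofReal_integral_sub_le_dualEnergy (hψ : ConvexOn ℝ univ ψ) (hnonneg : ∀ x, 0 ≤ ψ x)
    (h0 : ψ 0 = 0) (hg : Continuous g) (hχ : Continuous χ) (hχc : HasCompactSupport χ)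
    (hχ01 : ∀ x, χ x ∈ Icc 0 1) {h : ℝ} (hh : 0 < h) :
    ENNReal.ofReal (∫ x, χ x * ψ (g x) ∂m - ∫ x, χ x * secondDifference ψ h (g x) ∂m) ≤
      dualEnergy ψ m fun w => ∫ x, w x * g x ∂m := by
  have hψc : Continuous ψ := continuousOn_univ.mp (hψ.continuousOn isOpen_univ)
  set s : X → ℝ := fun x => slope ψ (g x) (g x + h) with hs
  have hsc : Continuous s := by
    simp only [hs, slope_def_field, add_sub_cancel_left]
    fun_prop
  set D : X → ℝ := fun x => secondDifference ψ h (g x) with hD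
  have hDc : Continuous D := by
    simp only [hD, secondDifference]
    fun_prop
  have hbound_nonneg : ∀ x, 0 ≤ χ x * (s x * g x - ψ (g x) + D x) := fun x =>
    mul_nonneg (hχ01 x).1 (by simpa [h0] using slope_mul_sub_le hψ hh (g x) 0)
  have hint {f : X → ℝ} (hf : Continuous f) : Integrable (fun x => χ x * f x) m :=
    (hχ.mul hf).integrable_of_hasCompactSupport hχc.mul_right
  have hconj : ∫⁻ x, convexConj ψ (χ x * s x) ∂m ≤
      ENNReal.ofReal (∫ x, χ x * (s x * g x - ψ (g x) + D x) ∂m) := by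
    rw [ofReal_integral_eq_lintegral_ofReal (hint (by fun_prop)) (.of_forall hbound_nonneg)]
    exact lintegral_mono fun x => convexConj_mul_slope_le hψ hnonneg (hχ01 x) hh (g x)
  have hgap : ∫ x, χ x * ψ (g x) ∂m - ∫ x, χ x * D x ∂m =
      ∫ x, χ x * s x * g x ∂m - ∫ x, χ x * (s x * g x - ψ (g x) + D x) ∂m := by
    simp only [mul_assoc, mul_add, mul_sub]
    rw [integral_add (f := fun x => χ x * (s x * g x) - χ x * ψ (g x))
      ((hint (by fun_prop)).sub (hint (by fun_prop))) (hint hDc),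
      integral_sub (hint (by fun_prop)) (hint (by fun_prop))]
    ring
  rw [hgap]
  exact ofReal_sub_le_dualEnergy (fun w => ∫ x, w x * g x ∂m) (hχ.mul hsc) hχc.mul_right
    (integral_nonneg hbound_nonneg) hconj

theorem lintegral_mul_le_dualEnergy (hψ : ConvexOn ℝ univ ψ) (hnonneg : ∀ x, 0 ≤ ψ x)
    (h0 : ψ 0 = 0) (hg : Continuous g) (hχ : Continuous χ) (hχc : HasCompactSupport χ)
    (hχ01 : ∀ x, χ x ∈ Icc 0 1) :
    ∫⁻ x, ENNReal.ofReal (χ x * ψ (g x)) ∂m ≤ dualEnergy ψ m fun w => ∫ x, w x * g x ∂m := by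
  have hψc : Continuous ψ := continuousOn_univ.mp (hψ.continuousOn isOpen_univ)
  have hint : Integrable (fun x => χ x * ψ (g x)) m :=
    (hχ.mul (hψc.comp hg)).integrable_of_hasCompactSupport hχc.mul_right
  rw [← ofReal_integral_eq_lintegral_ofReal hint
    (.of_forall fun x => mul_nonneg (hχ01 x).1 (hnonneg _))]
  have hlim : Tendsto (fun h => ENNReal.ofReal
      (∫ x, χ x * ψ (g x) ∂m - ∫ x, χ x * secondDifference ψ h (g x) ∂m))
      (𝓝[>] 0) (𝓝 (ENNReal.ofReal (∫ x, χ x * ψ (g x) ∂m))) := by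
    refine ENNReal.tendsto_ofReal ?_
    simpa only [sub_zero] using tendsto_const_nhds.sub
      ((tendsto_integral_mul_secondDifference hψc hg hχ hχc).mono_left nhdsWithin_le_nhds)
  exact le_of_tendsto hlim (eventually_mem_nhdsWithin.mono fun h hh =>
    ofReal_integral_sub_le_dualEnergy hψ hnonneg h0 hg hχ hχc hχ01 hh)

theorem lintegral_comp_le_dualEnergy [LocallyCompactSpace X] [RegularSpace X]
    [SigmaCompactSpace X] (hψ : ConvexOn ℝ univ ψ) (hnonneg : ∀ x, 0 ≤ ψ x) (h0 : ψ 0 = 0)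
    (hg : Continuous g) :
    ∫⁻ x, ENNReal.ofReal (ψ (g x)) ∂m ≤ dualEnergy ψ m fun w => ∫ x, w x * g x ∂m := by
  refine lintegral_le_of_forall_setLIntegral_isCompact_le fun K hK => ?_
  obtain ⟨χ, hχK, -, hχc, hχ01⟩ :=
    exists_continuous_one_zero_of_isCompact hK.closure isClosed_empty (disjoint_empty _)
  calc ∫⁻ x in K, ENNReal.ofReal (ψ (g x)) ∂m
      ≤ ∫⁻ x in closure K, ENNReal.ofReal (ψ (g x)) ∂m := lintegral_mono_set subset_closure
    _ = ∫⁻ x in closure K, ENNReal.ofReal (χ x * ψ (g x)) ∂m :=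
        setLIntegral_congr_fun isClosed_closure.measurableSet fun x hx => by
          rw [hχK hx, Pi.one_apply, one_mul]
    _ ≤ ∫⁻ x, ENNReal.ofReal (χ x * ψ (g x)) ∂m := setLIntegral_le_lintegral _ _
    _ ≤ _ := lintegral_mul_le_dualEnergy hψ hnonneg h0 hg χ.continuous hχc hχ01

end DualEnergy

section Kernel

variable {X : Type*} [TopologicalSpace X] [MeasurableSpace X] {m : Measure X} {k : X → ℝ}

/-- A mollification kernel: a continuous, compactly supported probability density with respect to
`m`. -/
structure IsMollifier (m : Measure X) (k : X → ℝ) : Prop where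
  continuous : Continuous k
  hasCompactSupport : HasCompactSupport k
  nonneg : ∀ x, 0 ≤ k x
  integral_eq_one : ∫ x, k x ∂m = 1

/-- The measure with density `k` with respect to `m`; negative values of `k` are truncated to
`0`. -/
noncomputable def kernelMeasure (m : Measure X) (k : X → ℝ) : Measure X :=
  m.withDensity fun x => ENNReal.ofReal (k x)

variable [OpensMeasurableSpace X]

theorem IsMollifier.ae_mem_tsupport (hk : IsMollifier m k) :
    ∀ᵐ s ∂kernelMeasure m k, s ∈ tsupport k := by
  rw [kernelMeasure, ae_withDensity_iff hk.continuous.measurable.ennreal_ofReal]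
  exact .of_forall fun s hs => subset_tsupport k fun h => hs (by rw [h, ENNReal.ofReal_zero])

theorem IsMollifier.isProbabilityMeasure_kernelMeasure [IsFiniteMeasureOnCompacts m]
    (hk : IsMollifier m k) : IsProbabilityMeasure (kernelMeasure m k) := by
  constructor
  rw [kernelMeasure, withDensity_apply _ .univ, setLIntegral_univ,
    ← ofReal_integral_eq_lintegral_ofReal
      (hk.continuous.integrable_of_hasCompactSupport hk.hasCompactSupport) (.of_forall hk.nonneg),
    hk.integral_eq_one, ENNReal.ofReal_one]

end Kernel

theorem continuous_integral_of_bounded {X Y : Type*} [TopologicalSpace X]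
    [FirstCountableTopology X] [TopologicalSpace Y] [MeasurableSpace Y] [OpensMeasurableSpace Y]
    {ν : Measure Y} [IsFiniteMeasure ν] {F : X → Y → ℝ} (hF : Continuous F.uncurry) {B : ℝ}
    (hB : ∀ x y, ‖F x y‖ ≤ B) : Continuous fun x => ∫ y, F x y ∂ν :=
  continuous_of_dominated (fun _ => (hF.comp (.prodMk_right _)).aestronglyMeasurable)
    (fun x => .of_forall (hB x)) (integrable_const B)
    (.of_forall fun _ => hF.comp (.prodMk_left _))

section Averaging

variable {G : Type*} [AddCommGroup G] [TopologicalSpace G] [MeasurableSpace G]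
  {κ m : Measure G} {ψ : ℝ → ℝ} {k w : G → ℝ}

/-- The average of the translates `w (· + s)` over `s` distributed according to `κ`. For `κ` with
density `k` it is the adjoint of mollification by `k`. -/
noncomputable def translateAverage (κ : Measure G) (w : G → ℝ) (x : G) : ℝ :=
  ∫ s, w (x + s) ∂κ

/-- The convolution `k ∗ μ` of a kernel with a finite signed measure. -/
noncomputable def mollify (μ : SignedMeasure G) (k : G → ℝ) (x : G) : ℝ :=
  sintegral μ fun z => k (x - z)

variable [IsTopologicalAddGroup G]

theorem hasCompactSupport_translateAverage (hwc : HasCompactSupport w) {K : Set G}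
    (hK : IsCompact K) (hκ : ∀ᵐ s ∂κ, s ∈ K) : HasCompactSupport (translateAverage κ w) := by
  refine .intro (hwc.isCompact.add hK.neg) fun x hx => integral_eq_zero_of_ae ?_
  filter_upwards [hκ] with s hs
  exact image_eq_zero_of_notMem_tsupport fun hxs =>
    hx ⟨x + s, hxs, -s, neg_mem_neg.mpr hs, add_neg_cancel_right x s⟩

variable [BorelSpace G]

theorem IsMollifier.translateAverage_kernelMeasure [m.IsAddLeftInvariant] (hk : IsMollifier m k)
    (w : G → ℝ) (x : G) :
    translateAverage (kernelMeasure m k) w x = ∫ t, k (t - x) * w t ∂m := by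
  have hkm : Measurable fun s => ENNReal.ofReal (k s) := hk.continuous.measurable.ennreal_ofReal
  rw [translateAverage, kernelMeasure, integral_withDensity_eq_integral_toReal_smul hkm
      (.of_forall fun _ => ENNReal.ofReal_lt_top),
    ← integral_add_left_eq_self (fun t => k (t - x) * w t) x]
  simp only [ENNReal.toReal_ofReal (hk.nonneg _), smul_eq_mul, add_sub_cancel_left]

variable [SecondCountableTopology G]

theorem continuous_translateAverage [IsFiniteMeasure κ] (hw : Continuous w)
    (hwc : HasCompactSupport w) : Continuous (translateAverage κ w) := by
  obtain ⟨B, hB⟩ := hwc.exists_bound_of_continuous hw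
  exact continuous_integral_of_bounded (by fun_prop) fun x s => hB (x + s)

theorem continuous_integral_sub (ν : Measure G) [IsFiniteMeasure ν] (hk : Continuous k)
    (hkc : HasCompactSupport k) : Continuous fun x => ∫ z, k (x - z) ∂ν := by
  obtain ⟨B, hB⟩ := hkc.exists_bound_of_continuous hk
  exact continuous_integral_of_bounded (by fun_prop) fun x z => hB (x - z)

theorem continuous_mollify (μ : SignedMeasure G) (hk : Continuous k) (hkc : HasCompactSupport k) :
    Continuous (mollify μ k) :=
  (continuous_integral_sub _ hk hkc).sub (continuous_integral_sub _ hk hkc)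

theorem lintegral_convexConj_translateAverage_le [SFinite m] [m.IsAddRightInvariant]
    [IsProbabilityMeasure κ] (ψ : ℝ → ℝ) (hw : Continuous w) (hwc : HasCompactSupport w) :
    ∫⁻ x, convexConj ψ (translateAverage κ w x) ∂m ≤ ∫⁻ x, convexConj ψ (w x) ∂m := by
  obtain ⟨B, hB⟩ := hwc.exists_bound_of_continuous hw
  have hint (x : G) : Integrable (fun s => w (x + s)) κ :=
    .of_bound (by fun_prop : Continuous _).aestronglyMeasurable B (.of_forall fun s => hB (x + s))
  have hmeas : Measurable fun p : G × G => convexConj ψ (w (p.1 + p.2)) :=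
    (measurable_convexConj ψ).comp (by fun_prop : Continuous _).measurable
  calc ∫⁻ x, convexConj ψ (translateAverage κ w x) ∂m
      ≤ ∫⁻ x, ∫⁻ s, convexConj ψ (w (x + s)) ∂κ ∂m :=
        lintegral_mono fun x => convexConj_integral_le_lintegral (hint x)
    _ = ∫⁻ s, ∫⁻ x, convexConj ψ (w (x + s)) ∂m ∂κ :=
        lintegral_lintegral_swap hmeas.aemeasurable
    _ = ∫⁻ _, ∫⁻ x, convexConj ψ (w x) ∂m ∂κ :=
        lintegral_congr fun s => lintegral_add_right_eq_self (fun x => convexConj ψ (w x)) s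
    _ = ∫⁻ x, convexConj ψ (w x) ∂m := by rw [lintegral_const, measure_univ, mul_one]

variable [IsFiniteMeasureOnCompacts m] [m.IsAddLeftInvariant]

theorem IsMollifier.integral_translateAverage [SFinite m] (hk : IsMollifier m k)
    (ν : Measure G) [IsFiniteMeasure ν] (hw : Continuous w) (hwc : HasCompactSupport w) :
    ∫ x, translateAverage (kernelMeasure m k) w x ∂ν = ∫ t, w t * ∫ x, k (t - x) ∂ν ∂m := by
  have hkc := hk.continuous
  obtain ⟨B, hB⟩ := hk.hasCompactSupport.exists_bound_of_continuous hkc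
  have hint : Integrable (fun p : G × G => k (p.2 - p.1) * w p.2) (ν.prod m) :=
    ((hw.integrable_of_hasCompactSupport hwc).comp_snd ν).bdd_mul
      (by fun_prop : Continuous _).aestronglyMeasurable (.of_forall fun p => hB (p.2 - p.1))
  simp only [hk.translateAverage_kernelMeasure]
  rw [integral_integral_swap hint]
  simp only [integral_mul_const, mul_comm (w _)]

theorem IsMollifier.sintegral_translateAverage [SFinite m] (hk : IsMollifier m k)
    (μ : SignedMeasure G) (hw : Continuous w) (hwc : HasCompactSupport w) :
    sintegral μ (translateAverage (kernelMeasure m k) w) = ∫ t, w t * mollify μ k t ∂m := by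
  have hint (ν : Measure G) [IsFiniteMeasure ν] :
      Integrable (fun t => w t * ∫ z, k (t - z) ∂ν) m :=
    (hw.mul (continuous_integral_sub ν hk.continuous
      hk.hasCompactSupport)).integrable_of_hasCompactSupport hwc.mul_right
  simp only [sintegral, mollify, mul_sub]
  rw [hk.integral_translateAverage _ hw hwc, hk.integral_translateAverage _ hw hwc,
    integral_sub (hint _) (hint _)]

theorem IsMollifier.dualEnergy_mollify_le [SFinite m] (hk : IsMollifier m k) (ψ : ℝ → ℝ)
    (μ : SignedMeasure G) :
    dualEnergy ψ m (fun w => ∫ x, w x * mollify μ k x ∂m) ≤ dualEnergy ψ m (sintegral μ) := by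
  refine iSup_le fun ⟨w, hw, hwc, hfin⟩ => ?_
  have := hk.isProbabilityMeasure_kernelMeasure
  dsimp only
  rw [← hk.sintegral_translateAverage μ hw hwc]
  refine ofReal_sub_le_dualEnergy (sintegral μ) (continuous_translateAverage hw hwc)
    (hasCompactSupport_translateAverage hwc hk.hasCompactSupport.isCompact hk.ae_mem_tsupport)
    ENNReal.toReal_nonneg ?_
  rw [ENNReal.ofReal_toReal hfin]
  exact lintegral_convexConj_translateAverage_le ψ hw hwc

theorem mollified_energy_le_general [LocallyCompactSpace G] (hψ : ConvexOn ℝ univ ψ)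
    (hnonneg : ∀ x, 0 ≤ ψ x) (h0 : ψ 0 = 0) (μ : SignedMeasure G) (hk : IsMollifier m k) :
    ∫⁻ x, ENNReal.ofReal (ψ (mollify μ k x)) ∂m ≤ dualEnergy ψ m (sintegral μ) :=
  (lintegral_comp_le_dualEnergy hψ hnonneg h0
    (continuous_mollify μ hk.continuous hk.hasCompactSupport)).trans (hk.dualEnergy_mollify_le ψ μ)

end Averaging

section Rescaling

variable {E : Type*} [NormedAddCommGroup E] [NormedSpace ℝ E] {ρ : E → ℝ} {δ : ℝ}

/-- The rescaled kernel `ρ_δ(x) = δ^{-d} ρ(x/δ)`, where `d` is the dimension of `E`. -/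
noncomputable def rescaleKernel (δ : ℝ) (ρ : E → ℝ) (x : E) : ℝ :=
  (δ ^ Module.finrank ℝ E)⁻¹ * ρ (δ⁻¹ • x)

variable [MeasurableSpace E]

theorem mollify_rescaleKernel (μ : SignedMeasure E) (δ : ℝ) (ρ : E → ℝ) (x : E) :
    mollify μ (rescaleKernel δ ρ) x =
      (δ ^ Module.finrank ℝ E)⁻¹ * sintegral μ fun z => ρ (δ⁻¹ • (x - z)) := by
  simp only [mollify, rescaleKernel, sintegral, integral_const_mul, mul_sub]

theorem IsMollifier.rescale [BorelSpace E] [FiniteDimensional ℝ E] {m : Measure E}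
    [m.IsAddHaarMeasure] (hρ : IsMollifier m ρ) (hδ : 0 < δ) :
    IsMollifier m (rescaleKernel δ ρ) where
  continuous := continuous_const.mul (hρ.continuous.comp (continuous_const_smul δ⁻¹))
  hasCompactSupport := (hρ.hasCompactSupport.comp_smul (inv_ne_zero hδ.ne')).mul_left
  nonneg x := mul_nonneg (by positivity) (hρ.nonneg _)
  integral_eq_one := by
    unfold rescaleKernel
    rw [integral_const_mul, Measure.integral_comp_inv_smul, hρ.integral_eq_one, smul_eq_mul,
      mul_one, abs_of_pos (by positivity), inv_mul_cancel₀ (by positivity)]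

end Rescaling

/-- Let `ψ` be a sublinear potential satisfying (A5'),
`μ ∈ M(ℝ^d)` and `ρ ∈ C_c^∞(ℝ^d)` a nonnegative even mollifier supported in the
unit ball with `∫ ρ = 1`; set `ρ_δ(x) = δ^{-d} ρ(x/δ)`. Then for every `δ > 0`,
`∫_{ℝ^d} ψ((ρ_δ ∗ μ)(x)) dx ≤ sup { ∫ v dμ − ∫ ψ*(v) dx : v ∈ C_c(ℝ^d), ψ*∘v ∈ L¹ }`. -/
theorem mollified_energy_le (d : ℕ) (ψ : ℝ → ℝ)
    (hconv : ConvexOn ℝ Set.univ ψ) (hlsc : LowerSemicontinuous ψ)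
    (hnonneg : ∀ x, 0 ≤ ψ x) (h0 : ψ 0 = 0) (hsymm : ∀ x, ψ x = ψ (-x))
    (hsub : ∃ C > 0, ∀ x : ℝ, ψ x ≤ C * (1 + |x|))
    (hA5' : ∃ y > (0 : ℝ), 0 < ψ y)
    (μ : MeasureTheory.SignedMeasure (EuclideanSpace ℝ (Fin d)))
    (ρ : EuclideanSpace ℝ (Fin d) → ℝ)
    (hρsmooth : ContDiff ℝ (⊤ : ℕ∞) ρ) (hρsupp : HasCompactSupport ρ)
    (hρball : tsupport ρ ⊆ Metric.ball 0 1)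
    (hρnonneg : ∀ x, 0 ≤ ρ x) (hρint : ∫ x, ρ x = 1)
    (hρeven : ∀ x, ρ x = ρ (-x))
    (δ : ℝ) (hδ : 0 < δ) :
    (∫⁻ x, ENNReal.ofReal
        (ψ ((δ ^ d)⁻¹ * sintegral μ (fun z => ρ (δ⁻¹ • (x - z))))))
      ≤ ⨆ v : {v : EuclideanSpace ℝ (Fin d) → ℝ //
            Continuous v ∧ HasCompactSupport v ∧ (∫⁻ x, convexConj ψ (v x)) ≠ ⊤},
          ENNReal.ofReal (sintegral μ v.1 - (∫⁻ x, convexConj ψ (v.1 x)).toReal) := by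
  have hρ : IsMollifier volume ρ := ⟨hρsmooth.continuous, hρsupp, hρnonneg, hρint⟩
  simpa only [mollify_rescaleKernel, dualEnergy, finrank_euclideanSpace_fin] using
    mollified_energy_le_general hconv hnonneg h0 μ (hρ.rescale hδ)
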